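/- Let n ≥ 3 and c ∈ ℝ. Consider the two curve-germs in ℝ^{2n} (coordinates (p₁,q₁,p₂,q₂,p₃,q₃,…,pₙ,qₙ), all unlisted coordinates equal to 0): B₁(t) = (t³, −(c/3)t⁶, 0, t⁵, −t², 0, …, 0) and B₂(t) = (t³, 0, −t², 0, 0, 0, …, 0) (the class (T₇)⁵). Then Lt(B₁,B₂) = 5, while Lt(B₁) = ∞ and Lt(B₂) = ∞. -/

import Mathlib

noncomputable section

/-- The order of vanishing at `0` of a function `h : ℝ → ℝ`: the least `k ≥ 1` such that
the `k`-th derivative of `h` at `0` is nonzero, and `∞` if all derivatives vanish at `0`. -/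
def vanishOrder (h : ℝ → ℝ) : ℕ∞ :=
  sInf {k : ℕ∞ | ∃ m : ℕ, k = m ∧ 1 ≤ m ∧ iteratedDeriv m h 0 ≠ 0}

/-- The standard symplectic form `ω = ∑ dpᵢ ∧ dqᵢ` on `ℝ^{2n}`, where the coordinates are
ordered as `(p₁, q₁, …, pₙ, qₙ)` (so `pᵢ` has index `2(i-1)` and `qᵢ` has index `2(i-1)+1`). -/
def stdSymp (n : ℕ) (u v : Fin (2 * n) → ℝ) : ℝ :=
  ∑ i : Fin n,
    (u ⟨2 * i.val, by have := i.isLt; omega⟩ * v ⟨2 * i.val + 1, by have := i.isLt; omega⟩ -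
     u ⟨2 * i.val + 1, by have := i.isLt; omega⟩ * v ⟨2 * i.val, by have := i.isLt; omega⟩)

/-- A germ at `0` of a smooth Lagrangian submanifold of `(ℝ^{2n}, ω)`, given by `n` smooth
functions `H₁, …, Hₙ` vanishing at `0`, whose differentials are linearly independent at the
points of `{H₁ = ⋯ = Hₙ = 0}` near `0`, and such that `ω` vanishes on `ker DH(x)` at every
such point. -/
structure LagrangianGerm (n : ℕ) : Type where
  H : Fin n → (Fin (2 * n) → ℝ) → ℝ
  smooth : ∀ i, ContDiff ℝ (⊤ : ℕ∞) (H i)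
  zero_at_zero : ∀ i, H i 0 = 0
  lagrangian : ∃ U : Set (Fin (2 * n) → ℝ), IsOpen U ∧ 0 ∈ U ∧
    ∀ x ∈ U, (∀ i, H i x = 0) →
      LinearIndependent ℝ (fun i => fderiv ℝ (H i) x) ∧
      ∀ u v : Fin (2 * n) → ℝ, (∀ i, fderiv ℝ (H i) x u = 0) →
        (∀ i, fderiv ℝ (H i) x v = 0) → stdSymp n u v = 0

/-- The tangency order `t(f, L)` of a curve `f` to a Lagrangian submanifold-germ `L`:
the minimum over `i` of the order of vanishing at `0` of `Hᵢ ∘ f`. -/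
def tOrd {n : ℕ} (f : ℝ → Fin (2 * n) → ℝ) (L : LagrangianGerm n) : ℕ∞ :=
  ⨅ i : Fin n, vanishOrder (fun t => L.H i (f t))

/-- The Lagrangian tangency order `Lt(f)` of a curve `f`. -/
def Lt1 {n : ℕ} (f : ℝ → Fin (2 * n) → ℝ) : ℕ∞ :=
  ⨆ L : LagrangianGerm n, tOrd f L

/-- The Lagrangian tangency order `Lt(f, g)` of a multi-germ of two curves. -/
def Lt2 {n : ℕ} (f g : ℝ → Fin (2 * n) → ℝ) : ℕ∞ :=
  ⨆ L : LagrangianGerm n, min (tOrd f L) (tOrd g L)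

/-- The Lagrangian tangency order `Lt(f, g, h)` of a multi-germ of three curves. -/
def Lt3 {n : ℕ} (f g h : ℝ → Fin (2 * n) → ℝ) : ℕ∞ :=
  ⨆ L : LagrangianGerm n, min (tOrd f L) (min (tOrd g L) (tOrd h L))


section aux

lemma aux_coef (a C δ : ℝ) (hδ : 0 < δ) (g : ℝ → ℝ) (hg : Continuous g)
    (h : ∀ t, 0 < t → t < δ → |a + t * g t| ≤ C * t) : a = 0 := by
  have h1 : Filter.Tendsto (fun t => |a + t * g t|) (nhdsWithin 0 (Set.Ioi 0)) (nhds (|a + 0 * g 0|)) := by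
    apply Filter.Tendsto.mono_left _ nhdsWithin_le_nhds
    exact Continuous.tendsto (by fun_prop) 0
  have h2 : Filter.Tendsto (fun t : ℝ => C * t) (nhdsWithin 0 (Set.Ioi 0)) (nhds (C * 0)) := by
    apply Filter.Tendsto.mono_left _ nhdsWithin_le_nhds
    exact Continuous.tendsto (by fun_prop) 0
  have h3 := le_of_tendsto_of_tendsto h1 h2 (by
    filter_upwards [Ioo_mem_nhdsGT hδ] with t ht
    exact h t ht.1 ht.2)
  simp at h3
  exact h3

lemma aux_coefs (a b c d C δ : ℝ) (hδ : 0 < δ)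
    (h : ∀ t, 0 < t → t < δ → |a * t ^ 2 + b * t ^ 3 + c * t ^ 4 + d * t ^ 5| ≤ C * t ^ 6) :
    a = 0 ∧ b = 0 ∧ c = 0 ∧ d = 0 := by
  have hC : 0 ≤ C := by
    have := (abs_nonneg _).trans (h (δ/2) (by linarith) (by linarith))
    exact nonneg_of_mul_nonneg_left this (by positivity)
  have key : ∀ (k j : ℕ) (x δ' : ℝ) (g : ℝ → ℝ), Continuous g → 0 < δ' → δ' ≤ 1 →
      (∀ t, 0 < t → t < δ' → |t ^ k * (x + t * g t)| ≤ C * t ^ (k + 1 + j)) → x = 0 := by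
    intro k j x δ' g hg hδ' hδ1 hh
    refine aux_coef x C δ' hδ' g hg fun t ht htd => ?_
    have h1 := hh t ht htd
    rw [abs_mul, abs_of_pos (pow_pos ht k), add_assoc, pow_add, mul_left_comm] at h1
    have h2 := le_of_mul_le_mul_left h1 (pow_pos ht k)
    refine h2.trans ?_
    gcongr
    rw [pow_add, pow_one]
    exact mul_le_of_le_one_right ht.le (pow_le_one₀ ht.le (by linarith))
  have hm : 0 < min δ 1 := lt_min hδ one_pos
  have hd : ∀ t, t < min δ 1 → t < δ := fun t ht => ht.trans_le (min_le_left _ _)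
  have ha : a = 0 := key 2 3 a _ (fun t => b + c * t + d * t ^ 2) (by fun_prop) hm (min_le_right _ _) fun t h0 h1 => by
    convert h t h0 (hd t h1) using 2; ring
  subst ha
  have hb : b = 0 := key 3 2 b _ (fun t => c + d * t) (by fun_prop) hm (min_le_right _ _) fun t h0 h1 => by
    convert h t h0 (hd t h1) using 2; ring
  subst hb
  have hc : c = 0 := key 4 1 c _ (fun t => d) (by fun_prop) hm (min_le_right _ _) fun t h0 h1 => by
    convert h t h0 (hd t h1) using 2; ring
  subst hc
  have hdd : d = 0 := key 5 0 d _ (fun t => 0) (by fun_prop) hm (min_le_right _ _) fun t h0 h1 => by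
    convert h t h0 (hd t h1) using 2; ring
  exact ⟨rfl, rfl, rfl, hdd⟩

lemma aux_flat (h : ℝ → ℝ) (hs : ContDiff ℝ (⊤ : ℕ∞) h) (h0 : h 0 = 0)
    (hv : 5 < vanishOrder h) : ∃ C, ∀ t ∈ Set.Icc (0:ℝ) 1, |h t| ≤ C * t ^ 6 := by
  have hz : ∀ m : ℕ, m ≤ 5 → iteratedDeriv m h 0 = 0 := by
    intro m hm
    rcases Nat.eq_zero_or_pos m with rfl | hp
    · simpa using h0
    by_contra hne
    have : vanishOrder h ≤ m := sInf_le ⟨m, rfl, hp, hne⟩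
    have h2 := hv.trans_le this
    have : (5:ℕ) < m := by exact_mod_cast h2
    omega
  obtain ⟨C, hC⟩ := exists_taylor_mean_remainder_bound (n := 5) (zero_le_one (α := ℝ))
    (f := h) (by
      have := (contDiff_infty.1 hs 6).contDiffOn (s := Set.Icc (0:ℝ) 1)
      norm_num at this ⊢
      exact this)
  refine ⟨C, fun t ht => ?_⟩
  have := hC t ht
  have e : taylorWithinEval h 5 (Set.Icc 0 1) 0 t = 0 := by
    rw [taylor_within_apply]
    apply Finset.sum_eq_zero
    intro k hk
    rw [iteratedDerivWithin_eq_iteratedDeriv (uniqueDiffOn_Icc one_pos)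
      (contDiff_infty.1 hs k).contDiffAt (by simp), hz k (by simp at hk; omega)]
    simp
  rw [e] at this
  simpa using this

variable {E F : Type*} [NormedAddCommGroup E] [NormedSpace ℝ E]
  [NormedAddCommGroup F] [NormedSpace ℝ F]

lemma aux_mv (f : E → F) (hf : Differentiable ℝ f) (h0 : f 0 = 0) (C r : ℝ) (hC : 0 ≤ C) (k : ℕ)
    (h : ∀ x, ‖x‖ < r → ‖fderiv ℝ f x‖ ≤ C * ‖x‖ ^ k) (x : E) (hx : ‖x‖ < r) :
    ‖f x‖ ≤ C * ‖x‖ ^ (k + 1) := by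
  have := (convex_closedBall (0:E) ‖x‖).norm_image_sub_le_of_norm_fderiv_le (𝕜 := ℝ) (f := f)
    (C := C * ‖x‖ ^ k) (x := 0) (y := x) (fun y _ => hf y) (fun y hy => by
      have hy' : ‖y‖ ≤ ‖x‖ := by simpa using hy
      refine (h y (by linarith)).trans ?_
      gcongr) (by simp) (by simp)
  simpa [h0, pow_succ, mul_assoc] using this

lemma aux_taylor (G : E → ℝ) (hG : ContDiff ℝ (⊤ : ℕ∞) G) (h0 : G 0 = 0) :
    ∃ C r : ℝ, 0 ≤ C ∧ 0 < r ∧ ∀ x, ‖x‖ < r →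
      |G x - (fderiv ℝ G 0 x + 1 / 2 * fderiv ℝ (fderiv ℝ G) 0 x x)| ≤ C * ‖x‖ ^ 3 := by
  have hG1 : ContDiff ℝ (⊤ : ℕ∞) (fderiv ℝ G) := hG.fderiv_right (by simp)
  have hG2 : ContDiff ℝ (⊤ : ℕ∞) (fderiv ℝ (fderiv ℝ G)) := hG1.fderiv_right (by simp)
  have d0 : Differentiable ℝ G := hG.differentiable (by simp)
  have d1 : Differentiable ℝ (fderiv ℝ G) := hG1.differentiable (by simp)
  have d2 : Differentiable ℝ (fderiv ℝ (fderiv ℝ G)) := hG2.differentiable (by simp)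
  have sym : IsSymmSndFDerivAt ℝ G 0 := (contDiff_infty.1 hG 2).contDiffAt.isSymmSndFDerivAt (by
    simp [minSmoothness_of_isRCLikeNormedField])
  set A := fderiv ℝ (fderiv ℝ G) 0 with hA
  have hO := HasFDerivAt.isBigO_sub (𝕜 := ℝ) (E := E) (F := E →L[ℝ] E →L[ℝ] ℝ) (d2 0).hasFDerivAt
  obtain ⟨C, hC0, hC⟩ := hO.exists_nonneg
  rw [Asymptotics.isBigOWith_iff, Metric.eventually_nhds_iff] at hC
  obtain ⟨r, hr, hC⟩ := hC
  have hS : ∀ x, HasFDerivAt (fun x => fderiv ℝ G x - fderiv ℝ G 0 - A x)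
      (fderiv ℝ (fderiv ℝ G) x - A) x := fun x =>
    ((d1 x).hasFDerivAt.sub_const _).sub A.hasFDerivAt
  have hR : ∀ x, HasFDerivAt (fun x => G x - (fderiv ℝ G 0 x + 1 / 2 * A x x))
      (fderiv ℝ G x - fderiv ℝ G 0 - A x) x := fun x => by
    have h1 : HasFDerivAt (fun x => A x x) _ x := (A.hasFDerivAt (x := x)).clm_apply (hasFDerivAt_id x)
    have h2 := (d0 x).hasFDerivAt.sub ((fderiv ℝ G 0).hasFDerivAt.add (h1.const_mul (1/2)))
    refine h2.congr_fderiv ?_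
    ext v
    have := sym.eq x v
    simp at this ⊢
    rw [← hA] at this
    linarith
  refine ⟨C, r, hC0, hr, fun x hx => ?_⟩
  refine aux_mv _ (fun x => (hR x).differentiableAt) (by simp [h0]) C r hC0 2 (fun x hx => ?_) x hx
  rw [(hR x).fderiv]
  refine aux_mv _ (fun x => (hS x).differentiableAt) (by simp) C r hC0 1 (fun x hx => ?_) x hx
  rw [(hS x).fderiv]
  simpa using hC (y := x) (by simpa using hx)

lemma aux_lag [FiniteDimensional ℝ E] (n : ℕ) (hE : Module.finrank ℝ E = 2 * n)
    (Ω : E →L[ℝ] E →L[ℝ] ℝ) (X : (E →L[ℝ] ℝ) →L[ℝ] E)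
    (hΩX : ∀ α, Ω (X α) = α) (hXΩ : ∀ v, X (Ω v) = v)
    (φ : Fin n → E →L[ℝ] ℝ)
    (iso : ∀ u v, (∀ i, φ i u = 0) → (∀ i, φ i v = 0) → Ω u v = 0) :
    (∀ v, (∀ i, φ i v = 0) → ∃ a : Fin n → ℝ, v = X (∑ i, a i • φ i)) ∧
    (∀ i j, φ i (X (φ j)) = 0) := by
  have h1 : ∀ v, (∀ i, φ i v = 0) → ∃ a : Fin n → ℝ, v = X (∑ i, a i • φ i) := by
    intro v hv
    have := mem_span_of_iInf_ker_le_ker (L := fun i => (φ i : E →ₗ[ℝ] ℝ)) (K := (Ω v : E →ₗ[ℝ] ℝ)) (by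
      intro w hw
      simp at hw ⊢
      exact iso v w hv hw)
    rw [Submodule.mem_span_range_iff_exists_fun] at this
    obtain ⟨a, ha⟩ := this
    refine ⟨a, ?_⟩
    have h2 : ∑ i, a i • φ i = Ω v := by
      ext w
      have := congrArg (fun f => f w) ha
      simpa using this
    rw [h2, hXΩ]
  refine ⟨h1, ?_⟩
  let Φ : E →ₗ[ℝ] (Fin n → ℝ) := LinearMap.pi fun i => (φ i : E →ₗ[ℝ] ℝ)
  let W : Submodule ℝ E := Submodule.span ℝ (Set.range fun i => X (φ i))
  have hKW : LinearMap.ker Φ ≤ W := by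
    intro v hv
    have hv' : ∀ i, φ i v = 0 := fun i => by
      have := congrFun (LinearMap.mem_ker.1 hv) i
      simpa [Φ] using this
    obtain ⟨a, ha⟩ := h1 v hv'
    rw [Submodule.mem_span_range_iff_exists_fun]
    exact ⟨a, by rw [ha]; simp⟩
  have hW : Module.finrank ℝ W ≤ n := by
    have := finrank_range_le_card (R := ℝ) (fun i => X (φ i))
    rw [Fintype.card_fin] at this
    exact this
  have hK := Φ.finrank_range_add_finrank_ker
  have hrg : Module.finrank ℝ (LinearMap.range Φ) ≤ n := by
    simpa using Submodule.finrank_le (LinearMap.range Φ)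
  have heq := Submodule.eq_of_le_of_finrank_le hKW (by omega)
  intro i j
  have : X (φ j) ∈ LinearMap.ker Φ := by rw [heq]; exact Submodule.subset_span ⟨j, rfl⟩
  have := congrFun (LinearMap.mem_ker.1 this) i
  simpa [Φ] using this

/-- symmetry of the second fundamental form -/
lemma aux_symm [FiniteDimensional ℝ E] (n : ℕ) (hE : Module.finrank ℝ E = 2 * n)
    (Ω : E →L[ℝ] E →L[ℝ] ℝ) (halt : ∀ u v, Ω u v = - Ω v u) (X : (E →L[ℝ] ℝ) →L[ℝ] E)
    (hΩX : ∀ α, Ω (X α) = α) (hXΩ : ∀ v, X (Ω v) = v)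
    (H : Fin n → E → ℝ) (hH : ∀ i, ContDiff ℝ (⊤ : ℕ∞) (H i)) (H0 : ∀ i, H i 0 = 0)
    (U : Set E) (hU : IsOpen U) (hU0 : 0 ∈ U)
    (hL : ∀ x ∈ U, (∀ i, H i x = 0) → LinearIndependent ℝ (fun i => fderiv ℝ (H i) x) ∧
      ∀ u v, (∀ i, fderiv ℝ (H i) x u = 0) → (∀ i, fderiv ℝ (H i) x v = 0) → Ω u v = 0)
    (u : E) (hu : ∀ i, fderiv ℝ (H i) 0 u = 0) (i j : Fin n) :
    fderiv ℝ (fderiv ℝ (H i)) 0 u (X (fderiv ℝ (H j) 0)) =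
    fderiv ℝ (fderiv ℝ (H j)) 0 u (X (fderiv ℝ (H i) 0)) := by
  have hG1 : ∀ i, ContDiff ℝ (⊤ : ℕ∞) (fderiv ℝ (H i)) := fun i => (hH i).fderiv_right (by simp)
  let P : E → ℝ := fun x => fderiv ℝ (H i) x (X (fderiv ℝ (H j) x))
  have hP : ContDiff ℝ (⊤ : ℕ∞) P := (hG1 i).clm_apply (X.contDiff.comp (hG1 j))
  have hPz : ∀ x ∈ U, (∀ i, H i x = 0) → P x = 0 := fun x hx hxH =>
    (aux_lag n hE Ω X hΩX hXΩ (fun i => fderiv ℝ (H i) x) (hL x hx hxH).2).2 i j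
  have hPd : fderiv ℝ P 0 u = fderiv ℝ (fderiv ℝ (H i)) 0 u (X (fderiv ℝ (H j) 0)) -
    fderiv ℝ (fderiv ℝ (H j)) 0 u (X (fderiv ℝ (H i) 0)) := by
    have e1 := ((hG1 i).differentiable (by simp) 0).hasFDerivAt
    have e2 := X.hasFDerivAt.comp 0 ((hG1 j).differentiable (by simp) 0).hasFDerivAt
    have e3 : HasFDerivAt P _ 0 := e1.clm_apply e2
    rw [e3.fderiv]
    have e4 : ∀ β : E →L[ℝ] ℝ, fderiv ℝ (H i) 0 (X β) = - β (X (fderiv ℝ (H i) 0)) := by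
      intro β
      have := halt (X (fderiv ℝ (H i) 0)) (X β)
      rwa [hΩX, hΩX] at this
    simp [e4]
    ring
  have hext : IsLocalExtrOn P {x | ∀ i, H i x = H i 0} 0 := by
    left
    have : ∀ᶠ x in nhdsWithin 0 {x | ∀ i, H i x = H i 0}, x ∈ U :=
      nhdsWithin_le_nhds (hU.mem_nhds hU0)
    filter_upwards [this, self_mem_nhdsWithin] with x hx hx2
    simp only [H0] at hx2
    rw [hPz x hx hx2, hPz 0 hU0 H0]
  obtain ⟨l, l0, hne, hl⟩ := hext.exists_multipliers_of_hasStrictFDerivAt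
    (fun i => ((hH i).contDiffAt.hasStrictFDerivAt (by simp)))
    (hP.contDiffAt.hasStrictFDerivAt (by simp))
  have hl0 : l0 ≠ 0 := by
    rintro rfl
    simp only [zero_smul, add_zero] at hl
    have := Fintype.linearIndependent_iff.1 (hL 0 hU0 H0).1 l hl
    apply hne
    ext k
    · exact this k
    · rfl
  have := congrArg (fun f => f u) hl
  simp [hu, hl0] at this
  linarith [this, hPd]

end aux

section aux2

def auxP {n : ℕ} (i : Fin n) : Fin (2 * n) := ⟨2 * i.val, by have := i.isLt; omega⟩
def auxQ {n : ℕ} (i : Fin n) : Fin (2 * n) := ⟨2 * i.val + 1, by have := i.isLt; omega⟩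

lemma auxP_inj {n : ℕ} (i j : Fin n) : auxP i = auxP j ↔ i = j := by
  simp only [auxP, Fin.ext_iff]; omega
lemma auxQ_inj {n : ℕ} (i j : Fin n) : auxQ i = auxQ j ↔ i = j := by
  simp only [auxQ, Fin.ext_iff]; omega
lemma auxPQ {n : ℕ} (i j : Fin n) : auxP i ≠ auxQ j := by
  simp only [auxP, auxQ, ne_eq, Fin.ext_iff]; omega
lemma auxQP {n : ℕ} (i j : Fin n) : auxQ i ≠ auxP j := by
  simp only [auxP, auxQ, ne_eq, Fin.ext_iff]; omega

lemma stdSymp_eq (n : ℕ) (u v : Fin (2 * n) → ℝ) :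
    stdSymp n u v = ∑ i : Fin n, (u (auxP i) * v (auxQ i) - u (auxQ i) * v (auxP i)) := rfl

lemma stdSymp_single_P (n : ℕ) (i : Fin n) (v : Fin (2 * n) → ℝ) :
    stdSymp n v (Pi.single (auxP i) 1) = - v (auxQ i) := by
  rw [stdSymp_eq, Finset.sum_eq_single i]
  · simp [Pi.single_apply, auxQP]
  · intro b _ hb
    simp [Pi.single_apply, auxQP, auxP_inj, hb]
  · simp

lemma stdSymp_single_Q (n : ℕ) (i : Fin n) (v : Fin (2 * n) → ℝ) :
    stdSymp n v (Pi.single (auxQ i) 1) = v (auxP i) := by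
  rw [stdSymp_eq, Finset.sum_eq_single i]
  · simp [Pi.single_apply, auxPQ]
  · intro b _ hb
    simp [Pi.single_apply, auxPQ, auxQ_inj, hb]
  · simp

lemma aux_exists_Omega (n : ℕ) : ∃ (Ω : (Fin (2 * n) → ℝ) →L[ℝ] (Fin (2 * n) → ℝ) →L[ℝ] ℝ)
    (X : ((Fin (2 * n) → ℝ) →L[ℝ] ℝ) →L[ℝ] (Fin (2 * n) → ℝ)),
    (∀ u v, Ω u v = stdSymp n u v) ∧ (∀ α, Ω (X α) = α) ∧ (∀ v, X (Ω v) = v) := by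
  let B : (Fin (2 * n) → ℝ) →ₗ[ℝ] (Fin (2 * n) → ℝ) →ₗ[ℝ] ℝ :=
    LinearMap.mk₂ ℝ (stdSymp n)
      (fun a b c => by
        simp only [stdSymp_eq, ← Finset.sum_add_distrib, Pi.add_apply]
        exact Finset.sum_congr rfl fun i _ => by ring)
      (fun r a c => by
        simp only [stdSymp_eq, Pi.smul_apply, smul_eq_mul, Finset.mul_sum]
        exact Finset.sum_congr rfl fun i _ => by ring)
      (fun a b c => by
        simp only [stdSymp_eq, ← Finset.sum_add_distrib, Pi.add_apply]
        exact Finset.sum_congr rfl fun i _ => by ring)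
      (fun r a c => by
        simp only [stdSymp_eq, Pi.smul_apply, smul_eq_mul, Finset.mul_sum]
        exact Finset.sum_congr rfl fun i _ => by ring)
  let T : (Fin (2 * n) → ℝ) →ₗ[ℝ] ((Fin (2 * n) → ℝ) →L[ℝ] ℝ) :=
    (LinearMap.toContinuousLinearMap : ((Fin (2 * n) → ℝ) →ₗ[ℝ] ℝ) ≃ₗ[ℝ] _).toLinearMap ∘ₗ B
  have hT : ∀ u v, T u v = stdSymp n u v := fun u v => rfl
  have hinj : Function.Injective T := by
    rw [← LinearMap.ker_eq_bot, LinearMap.ker_eq_bot']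
    intro u hu
    have h1 : ∀ v, stdSymp n u v = 0 := fun v => by rw [← hT, hu]; rfl
    ext k
    have hk := k.isLt
    rcases Nat.even_or_odd' k.val with ⟨m, hm | hm⟩
    · have : k = auxP ⟨m, by omega⟩ := by ext; simpa [auxP] using hm
      rw [this, ← stdSymp_single_Q n _ u, h1]; rfl
    · have : k = auxQ ⟨m, by omega⟩ := by ext; simpa [auxQ] using hm
      have h2 := stdSymp_single_P n ⟨m, by omega⟩ u
      rw [h1] at h2
      rw [this]
      simp; linarith
  have hfr : Module.finrank ℝ (Fin (2 * n) → ℝ) = Module.finrank ℝ ((Fin (2 * n) → ℝ) →L[ℝ] ℝ) := by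
    rw [← LinearEquiv.finrank_eq (LinearMap.toContinuousLinearMap : ((Fin (2 * n) → ℝ) →ₗ[ℝ] ℝ) ≃ₗ[ℝ] _)]
    exact (Subspace.dual_finrank_eq (K := ℝ) (V := Fin (2 * n) → ℝ)).symm
  let e := LinearEquiv.ofInjectiveOfFinrankEq T hinj hfr
  refine ⟨T.toContinuousLinearMap, e.symm.toLinearMap.toContinuousLinearMap, hT, ?_, ?_⟩
  · intro α
    exact e.apply_symm_apply α
  · intro v
    exact e.symm_apply_apply v

def auxg {n : ℕ} (hn : 3 ≤ n) (a b : ℝ) (i : Fin n) (x : Fin (2 * n) → ℝ) : ℝ :=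
  if i.val = 0 then a * x (auxP ⟨0, by omega⟩) ^ 2 + b * (x (auxP ⟨1, by omega⟩) * x (auxP ⟨2, by omega⟩))
  else if i.val = 1 then b * (x (auxP ⟨0, by omega⟩) * x (auxP ⟨2, by omega⟩))
  else if i.val = 2 then b * (x (auxP ⟨0, by omega⟩) * x (auxP ⟨1, by omega⟩))
  else 0

def auxdg {n : ℕ} (hn : 3 ≤ n) (a b : ℝ) (i : Fin n) (x u : Fin (2 * n) → ℝ) : ℝ :=
  if i.val = 0 then 2 * a * x (auxP ⟨0, by omega⟩) * u (auxP ⟨0, by omega⟩)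
    + b * (u (auxP ⟨1, by omega⟩) * x (auxP ⟨2, by omega⟩) + x (auxP ⟨1, by omega⟩) * u (auxP ⟨2, by omega⟩))
  else if i.val = 1 then b * (u (auxP ⟨0, by omega⟩) * x (auxP ⟨2, by omega⟩) + x (auxP ⟨0, by omega⟩) * u (auxP ⟨2, by omega⟩))
  else if i.val = 2 then b * (u (auxP ⟨0, by omega⟩) * x (auxP ⟨1, by omega⟩) + x (auxP ⟨0, by omega⟩) * u (auxP ⟨1, by omega⟩))
  else 0

lemma auxg_smooth {n : ℕ} (hn : 3 ≤ n) (a b : ℝ) (i : Fin n) :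
    ContDiff ℝ (⊤ : ℕ∞) (fun x : Fin (2 * n) → ℝ => x (auxQ i) - auxg hn a b i x) := by
  unfold auxg
  split_ifs <;> fun_prop

lemma auxg_fderiv {n : ℕ} (hn : 3 ≤ n) (a b : ℝ) (i : Fin n) (x u : Fin (2 * n) → ℝ) :
    fderiv ℝ (fun x : Fin (2 * n) → ℝ => x (auxQ i) - auxg hn a b i x) x u =
      u (auxQ i) - auxdg hn a b i x u := by
  have hp : ∀ k : Fin (2 * n), HasFDerivAt (fun x : Fin (2 * n) → ℝ => x k)
    (ContinuousLinearMap.proj k : (Fin (2 * n) → ℝ) →L[ℝ] ℝ) x := fun k => hasFDerivAt_apply k x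
  unfold auxg auxdg
  split_ifs
  · have h : HasFDerivAt (fun x : Fin (2 * n) → ℝ => x (auxQ i) - (a * x (auxP ⟨0, by omega⟩) ^ 2 + b * (x (auxP ⟨1, by omega⟩) * x (auxP ⟨2, by omega⟩)))) _ x :=
      (hp _).sub ((((hp _).pow 2).const_mul a).add (((hp _).mul (hp _)).const_mul b))
    rw [h.fderiv]
    simp
    try ring
  · have h : HasFDerivAt (fun x : Fin (2 * n) → ℝ => x (auxQ i) - b * (x (auxP ⟨0, by omega⟩) * x (auxP ⟨2, by omega⟩))) _ x :=
      (hp _).sub (((hp _).mul (hp _)).const_mul b)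
    rw [h.fderiv]
    simp
    try ring
  · have h : HasFDerivAt (fun x : Fin (2 * n) → ℝ => x (auxQ i) - b * (x (auxP ⟨0, by omega⟩) * x (auxP ⟨1, by omega⟩))) _ x :=
      (hp _).sub (((hp _).mul (hp _)).const_mul b)
    rw [h.fderiv]
    simp
    try ring
  · have h : HasFDerivAt (fun x : Fin (2 * n) → ℝ => x (auxQ i) - 0) _ x :=
      (hp _).sub (hasFDerivAt_const (0:ℝ) x)
    rw [h.fderiv]
    simp
    try ring

def auxL {n : ℕ} (hn : 3 ≤ n) (a b : ℝ) : LagrangianGerm n where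
  H i x := x (auxQ i) - auxg hn a b i x
  smooth i := auxg_smooth hn a b i
  zero_at_zero i := by simp [auxg]
  lagrangian := by
    refine ⟨Set.univ, isOpen_univ, trivial, fun x _ _ => ⟨?_, ?_⟩⟩
    · rw [Fintype.linearIndependent_iff]
      intro g hg i
      have := congrArg (fun f => f (Pi.single (auxQ i) 1)) hg
      simp only [ContinuousLinearMap.sum_apply, ContinuousLinearMap.smul_apply, auxg_fderiv] at this
      have hz : ∀ j, auxdg hn a b j x (Pi.single (auxQ i) 1) = 0 := fun j => by
        simp [auxdg, Pi.single_apply, auxPQ]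
      simpa [hz, Pi.single_apply, auxQ_inj] using this
    · intro u v hu hv
      simp only [auxg_fderiv, sub_eq_zero] at hu hv
      rw [stdSymp_eq]
      simp only [hu, hv]
      obtain ⟨m, rfl⟩ : ∃ m, n = m + 3 := ⟨n - 3, by omega⟩
      rw [Fin.sum_univ_succ, Fin.sum_univ_succ, Fin.sum_univ_succ]
      rw [Finset.sum_eq_zero]
      · simp only [auxdg, auxP, Fin.val_succ, Fin.val_zero]
        norm_num
        ring
      · intro i _
        simp [auxdg]

lemma vanishOrder_zero : vanishOrder (fun _ => 0) = ⊤ := by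
  unfold vanishOrder
  rw [sInf_eq_top]
  rintro k ⟨m, rfl, h1, h2⟩
  exfalso; apply h2
  simp [iteratedDeriv_const]

end aux2

section aux3

lemma aux_curve {E : Type*} [NormedAddCommGroup E] [NormedSpace ℝ E] (G : E → ℝ)
    (hG : ContDiff ℝ (⊤ : ℕ∞) G) (h0 : G 0 = 0) (a b d e : E)
    (hv : 5 < vanishOrder (fun t => G (t ^ 2 • a + t ^ 3 • b + t ^ 5 • d + t ^ 6 • e))) :
    fderiv ℝ G 0 a = 0 ∧ fderiv ℝ G 0 b = 0 ∧
      fderiv ℝ G 0 d + fderiv ℝ (fderiv ℝ G) 0 b a = 0 := by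
  obtain ⟨C1, r, hC1, hr, hT⟩ := aux_taylor G hG h0
  have hfs : ContDiff ℝ (⊤ : ℕ∞) (fun t : ℝ => t ^ 2 • a + t ^ 3 • b + t ^ 5 • d + t ^ 6 • e) := by
    fun_prop
  obtain ⟨C2, hC2⟩ := aux_flat _ (hG.comp hfs) (by simp [h0]) hv
  have sym : IsSymmSndFDerivAt ℝ G 0 := (contDiff_infty.1 hG 2).contDiffAt.isSymmSndFDerivAt (by
    simp [minSmoothness_of_isRCLikeNormedField])
  set A := fderiv ℝ (fderiv ℝ G) 0 with hA
  set φ := fderiv ℝ G 0 with hφ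
  have sym' : ∀ x y, A x y = A y x := fun x y => sym.eq x y
  let rr : ℝ → ℝ := fun t => φ e + 1/2 * A b b + t * A a d + t ^ 2 * (A b d + A a e) + t ^ 3 * A b e
    + 1/2 * t ^ 4 * A d d + t ^ 5 * A d e + 1/2 * t ^ 6 * A e e
  have hrr : Continuous rr := by fun_prop
  obtain ⟨C3, hC3⟩ := isCompact_Icc.exists_bound_of_continuousOn (s := Set.Icc (0:ℝ) 1) hrr.continuousOn
  let w : ℝ → E := fun t => a + t • b + t ^ 3 • d + t ^ 4 • e
  have hw : Continuous w := by fun_prop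
  obtain ⟨K, hK⟩ := isCompact_Icc.exists_bound_of_continuousOn (s := Set.Icc (0:ℝ) 1) hw.continuousOn
  have hfw : ∀ t : ℝ, t ^ 2 • a + t ^ 3 • b + t ^ 5 • d + t ^ 6 • e = t ^ 2 • w t := by
    intro t; simp only [w]; module
  have hlim : ∀ᶠ t in nhds (0:ℝ), ‖t ^ 2 • w t‖ < r := by
    have hc : Continuous fun t : ℝ => ‖t ^ 2 • w t‖ := by fun_prop
    exact hc.continuousAt.eventually_lt continuousAt_const (by simpa using hr)
  obtain ⟨δ, hδ, hδr⟩ := Metric.eventually_nhds_iff.1 hlim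
  have := aux_coefs (φ a) (φ b) (1/2 * A a a) (φ d + A b a) (C1 * K ^ 3 + C2 + C3) (min δ 1)
    (lt_min hδ one_pos) (fun t ht0 ht => by
      have ht1 : t ∈ Set.Icc (0:ℝ) 1 := ⟨ht0.le, (ht.trans_le (min_le_right _ _)).le⟩
      have e1 := hT _ (hδr (y := t) (by
        simp only [dist_zero_right, Real.norm_eq_abs, abs_of_pos ht0]
        exact ht.trans_le (min_le_left _ _)))
      have e2 := hC2 t ht1
      have e3 := hC3 t ht1
      have e4 := hK t ht1
      simp only [Function.comp_apply, hfw] at e2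
      have e5 : C1 * ‖t ^ 2 • w t‖ ^ 3 ≤ C1 * K ^ 3 * t ^ 6 := by
        rw [norm_smul, norm_pow, Real.norm_eq_abs, abs_of_pos ht0, mul_pow]
        have : ‖w t‖ ^ 3 ≤ K ^ 3 := by gcongr
        calc C1 * ((t ^ 2) ^ 3 * ‖w t‖ ^ 3) = C1 * t ^ 6 * ‖w t‖ ^ 3 := by ring
          _ ≤ C1 * t ^ 6 * K ^ 3 := by gcongr
          _ = _ := by ring
      have e6 : φ a * t ^ 2 + φ b * t ^ 3 + 1/2 * A a a * t ^ 4 + (φ d + A b a) * t ^ 5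
          = (φ (t ^ 2 • w t) + 1 / 2 * A (t ^ 2 • w t) (t ^ 2 • w t)) - t ^ 6 * rr t := by
        rw [← hfw]
        simp only [map_add, map_smul, add_apply, smul_apply, smul_eq_mul, rr]
        rw [sym' a b, sym' d a, sym' d b, sym' e a, sym' e b, sym' e d]
        ring
      have e7 : |t ^ 6 * rr t| ≤ C3 * t ^ 6 := by
        rw [abs_mul, abs_of_pos (pow_pos ht0 6), mul_comm]
        gcongr
        exact e3
      rw [e6]
      rw [abs_le] at *
      constructor <;> nlinarith [e1.1, e1.2, e2.1, e2.2, e7.1, e7.2])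
  exact ⟨this.1, this.2.1, this.2.2.2⟩

lemma aux_pow (k : ℝ) (N : ℕ) (hN : 5 ≤ N) : 5 ≤ vanishOrder (fun t => k * t ^ N) := by
  apply le_sInf
  rintro _ ⟨m, rfl, h1, h2⟩
  by_contra hlt
  have hm : m < 5 := by
    rw [not_le] at hlt
    exact_mod_cast hlt
  apply h2
  rw [iteratedDeriv_const_mul_field, iteratedDeriv_eq_iterate, iter_deriv_pow]
  simp
  right; right
  omega

lemma aux_upper (n : ℕ) (hn : 3 ≤ n) (c : ℝ) (L : LagrangianGerm n)
    (h1 : ∀ i, 5 < vanishOrder (fun t => L.H i (t ^ 2 • -(Pi.single (auxP ⟨2, by omega⟩) 1) +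
      t ^ 3 • (Pi.single (auxP ⟨0, by omega⟩) 1) + t ^ 5 • (Pi.single (auxQ ⟨1, by omega⟩) 1) +
      t ^ 6 • ((-(c/3)) • (Pi.single (auxQ ⟨0, by omega⟩) 1)))))
    (h2 : ∀ i, 5 < vanishOrder (fun t => L.H i (t ^ 2 • -(Pi.single (auxP ⟨1, by omega⟩) 1) +
      t ^ 3 • (Pi.single (auxP ⟨0, by omega⟩) 1) + t ^ 5 • 0 + t ^ 6 • 0))) : False := by
  have k1 := fun i => aux_curve _ (L.smooth i) (L.zero_at_zero i) _ _ _ _ (h1 i)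
  have k2 := fun i => aux_curve _ (L.smooth i) (L.zero_at_zero i) _ _ _ _ (h2 i)
  obtain ⟨Ω, X, hΩ, hΩX, hXΩ⟩ := aux_exists_Omega n
  obtain ⟨U, hU, hU0, hL⟩ := L.lagrangian
  simp only [← hΩ] at hL
  simp only [map_neg, neg_eq_zero, map_zero, zero_add] at k1 k2
  set p1 : Fin (2 * n) → ℝ := Pi.single (auxP ⟨0, by omega⟩) 1
  set p2 : Fin (2 * n) → ℝ := Pi.single (auxP ⟨1, by omega⟩) 1 with hp2
  set p3 : Fin (2 * n) → ℝ := Pi.single (auxP ⟨2, by omega⟩) 1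
  set q2 : Fin (2 * n) → ℝ := Pi.single (auxQ ⟨1, by omega⟩) 1
  have hE : Module.finrank ℝ (Fin (2 * n) → ℝ) = 2 * n := by simp
  have halt : ∀ u v, Ω u v = - Ω v u := by
    intro u v
    rw [hΩ, hΩ, stdSymp_eq, stdSymp_eq, ← Finset.sum_neg_distrib]
    exact Finset.sum_congr rfl fun i _ => by ring
  have hsy := aux_symm n hE Ω halt X hΩX hXΩ L.H L.smooth L.zero_at_zero U hU hU0 hL p1
    (fun i => (k1 i).2.1)
  have hlag := (aux_lag n hE Ω X hΩX hXΩ _ (hL 0 hU0 L.zero_at_zero).2).1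
  obtain ⟨a, ha⟩ := hlag p2 (fun i => (k2 i).1)
  obtain ⟨b, hb⟩ := hlag p3 (fun i => (k1 i).1)
  have s1 : ∑ i, a i * fderiv ℝ (fderiv ℝ (L.H i)) 0 p1 p3 = 1 := by
    have : Ω p2 q2 = 1 := by
      rw [hΩ, stdSymp_single_Q]; simp [hp2]
    rw [ha, hΩX] at this
    rw [← this]
    simp only [sum_apply, smul_apply, smul_eq_mul]
    refine Finset.sum_congr rfl fun i _ => ?_
    have := (k1 i).2.2
    rw [show fderiv ℝ (fderiv ℝ (L.H i)) 0 p1 p3 = fderiv ℝ (L.H i) 0 q2 by linarith]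
  have s2 : ∑ i, a i * fderiv ℝ (fderiv ℝ (L.H i)) 0 p1 p3 =
      ∑ j, b j * fderiv ℝ (fderiv ℝ (L.H j)) 0 p1 p2 := by
    rw [ha, hb]
    simp only [map_sum, map_smul, smul_eq_mul, Finset.mul_sum]
    rw [Finset.sum_comm]
    refine Finset.sum_congr rfl fun i _ => Finset.sum_congr rfl fun j _ => ?_
    rw [hsy]
    ring
  rw [s1] at s2
  simp [(k2 _).2.2] at s2

lemma aux_tOrd_top {n : ℕ} (f : ℝ → Fin (2 * n) → ℝ) (L : LagrangianGerm n)
    (h : ∀ i t, L.H i (f t) = 0) : tOrd f L = ⊤ := by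
  simp only [tOrd, h, vanishOrder_zero, iInf_top]

end aux3

/-- Lagrangian tangency orders for the class `(T₇)⁵`. -/
theorem T7_5_lagrangian_tangency_orders
    (n : ℕ) (hn : 3 ≤ n) (c : ℝ)
    (B₁ B₂ : ℝ → Fin (2 * n) → ℝ)
    (hB₁ : B₁ = fun (t : ℝ) (j : Fin (2 * n)) => if (j : ℕ) = 0 then t ^ 3 else if (j : ℕ) = 1 then -(c / 3) * t ^ 6 else if (j : ℕ) = 3 then t ^ 5 else if (j : ℕ) = 4 then -t ^ 2 else (0 : ℝ))
    (hB₂ : B₂ = fun (t : ℝ) (j : Fin (2 * n)) => if (j : ℕ) = 0 then t ^ 3 else if (j : ℕ) = 2 then -t ^ 2 else (0 : ℝ)) :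
    Lt2 B₁ B₂ = 5 ∧ Lt1 B₁ = ⊤ ∧ Lt1 B₂ = ⊤ := by
  subst hB₁ hB₂
  have hB2 : tOrd (fun (t : ℝ) (j : Fin (2 * n)) => if (j : ℕ) = 0 then t ^ 3 else if (j : ℕ) = 2 then -t ^ 2 else (0 : ℝ)) (auxL hn 0 0) = ⊤ := by
    apply aux_tOrd_top
    intro i t
    have e1 : ¬ (2 * i.val + 1 = 2) := by omega
    simp [auxL, auxg, auxQ, e1]
  refine ⟨le_antisymm ?_ ?_, ?_, ?_⟩
  · refine iSup_le fun L => ?_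
    by_contra hlt
    rw [not_le, lt_min_iff] at hlt
    refine aux_upper n hn c L (fun i => ?_) (fun i => ?_)
    · have := hlt.1.trans_le (iInf_le _ i)
      refine lt_of_lt_of_eq this (congrArg vanishOrder (funext fun t => congrArg (L.H i) (funext fun j => ?_)))
      simp only [Pi.add_apply, Pi.smul_apply, Pi.neg_apply, Pi.single_apply, Fin.ext_iff, auxP, auxQ, smul_eq_mul]
      split_ifs <;> first | omega | (simp; done) | (simp; ring)
    · have := hlt.2.trans_le (iInf_le _ i)
      refine lt_of_lt_of_eq this (congrArg vanishOrder (funext fun t => congrArg (L.H i) (funext fun j => ?_)))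
      simp only [Pi.add_apply, Pi.smul_apply, Pi.neg_apply, Pi.single_apply, Fin.ext_iff, auxP, auxQ, smul_eq_mul]
      split_ifs <;> first | omega | (simp; done) | (simp; ring)
  · refine le_trans (le_min ?_ ?_) (le_iSup (fun L => min (tOrd _ L) (tOrd _ L)) (auxL hn 0 0))
    · refine le_iInf fun i => ?_
      by_cases h0 : i.val = 0
      · refine le_of_le_of_eq (aux_pow (-(c/3)) 6 (by norm_num)) (congrArg vanishOrder (funext fun t => ?_))
        simp [auxL, auxg, auxQ, h0]
      by_cases h1 : i.val = 1
      · refine le_of_le_of_eq (aux_pow 1 5 (by norm_num)) (congrArg vanishOrder (funext fun t => ?_))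
        simp [auxL, auxg, auxQ, h1]
      · refine le_of_le_of_eq (aux_pow 0 5 (by norm_num)) (congrArg vanishOrder (funext fun t => ?_))
        have e1 : ¬ (2 * i.val + 1 = 4) := by omega
        have e2 : ¬ (2 * i.val + 1 = 3) := by omega
        simp [auxL, auxg, auxQ, h0, h1, e1]
    · rw [hB2]; exact le_top
  · refine top_le_iff.1 (le_trans (le_of_eq ?_) (le_iSup _ (auxL hn (-(c/3)) (-1))))
    symm
    apply aux_tOrd_top
    intro i t
    by_cases h0 : i.val = 0
    · simp [auxL, auxg, auxQ, auxP, h0]; ring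
    by_cases h1 : i.val = 1
    · simp [auxL, auxg, auxQ, auxP, h1]; ring
    by_cases h2 : i.val = 2
    · simp [auxL, auxg, auxQ, auxP, h2]
    · have e1 : ¬ (2 * i.val + 1 = 4) := by omega
      simp [auxL, auxg, auxQ, h0, h1, h2, e1]
  · exact top_le_iff.1 (le_trans (le_of_eq hB2.symm) (le_iSup _ (auxL hn 0 0)))

end
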